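/- Fix any ρ > 0. For every real damping parameter ω, the supremum over θ ∈ T^H of max{ |1 − ω|, |1 − ω·χ(θ)/4|, |1 − ω·σ*(4/χ(θ), ρ)| } (the spectral radius of the symbol of the Jacobi-Braess–Sarazin relaxation error operator) is at least 3/5, and this supremum equals 3/5 if and only if ω = 4/5. In other words, the optimal LFA smoothing factor for the Jacobi-Braess–Sarazin relaxation is 3/5, uniquely attained at ω = 4/5, independently of the Lamé constants. -/

import Mathlib

open Real Set

/-- The high-frequency set `T^H`. -/
def TH : Set (ℝ × ℝ) :=
  (Ioc (-(π/2)) (3*π/2) ×ˢ Ioc (-(π/2)) (3*π/2)) \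
    (Ioc (-(π/2)) (π/2) ×ˢ Ioc (-(π/2)) (π/2))

/-- Scaled symbol of the five-point discrete Laplacian. -/
noncomputable def chi (θ : ℝ × ℝ) : ℝ := 4 - 2 * Real.cos θ.1 - 2 * Real.cos θ.2

/-- Third eigenvalue of the preconditioned elasticity symbol, as a function of
`t = η/χ` and `ρ = ε/λ`. -/
noncomputable def sigmaStar (t ρ : ℝ) : ℝ := (1 + 2*ρ) / (1 + (1 + t)*ρ)

/-!
For `θ ∈ TH` at least one cosine in `chi θ` is nonpositive, so `chi θ / 4` lies in `[1/2, 2]`, with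
both ends attained; `1` and the third eigenvalue lie in the same interval. As `x ↦ |1 - ω * x|` is
convex, the supremum is `max |1 - ω / 2| |1 - ω * 2|`, in which `ρ` no longer occurs, and what
remains is the choice of the best damping of Richardson's iteration for a spectrum in `[a, b]`:
`ω = 2 / (a + b)`, with contraction factor `(b - a) / (a + b)`.
-/

section Damping

theorem abs_one_sub_mul_le_max {R : Type*} [Ring R] [LinearOrder R] [IsOrderedRing R] {a b x : R}
    (hx : x ∈ Icc a b) (ω : R) : |1 - ω * x| ≤ max |1 - ω * a| |1 - ω * b| := by
  rcases le_total 0 ω with hω | hω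
  · rw [max_comm]
    exact abs_le_max_abs_abs (sub_le_sub_left (mul_le_mul_of_nonneg_left hx.2 hω) 1)
      (sub_le_sub_left (mul_le_mul_of_nonneg_left hx.1 hω) 1)
  · exact abs_le_max_abs_abs (sub_le_sub_left (mul_le_mul_of_nonpos_left hx.1 hω) 1)
      (sub_le_sub_left (mul_le_mul_of_nonpos_left hx.2 hω) 1)

variable {K : Type*} [Field K] [LinearOrder K] [IsStrictOrderedRing K] {a b : K}

theorem sub_div_add_le_max_abs_one_sub_mul (ha : 0 < a) (hb : 0 < b) (ω : K) :
    (b - a) / (a + b) ≤ max |1 - ω * a| |1 - ω * b| := by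
  set M := max |1 - ω * a| |1 - ω * b|
  have left_le : 1 - ω * a ≤ M := (le_abs_self _).trans (le_max_left _ _)
  have right_le : -(1 - ω * b) ≤ M := (neg_le_abs _).trans (le_max_right _ _)
  rw [div_le_iff₀ (add_pos ha hb)]
  calc b - a = b * (1 - ω * a) + a * -(1 - ω * b) := by ring
    _ ≤ b * M + a * M := by gcongr
    _ = M * (a + b) := by ring

theorem max_abs_one_sub_mul_eq_sub_div_add_iff (ha : 0 < a) (hab : a ≤ b) {ω : K} :
    max |1 - ω * a| |1 - ω * b| = (b - a) / (a + b) ↔ ω = 2 / (a + b) := by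
  have hb : 0 < b := ha.trans_le hab
  have hs : 0 < a + b := add_pos ha hb
  have one_sub_left : 1 - 2 / (a + b) * a = (b - a) / (a + b) := by field_simp; ring
  have one_sub_right : 1 - 2 / (a + b) * b = -((b - a) / (a + b)) := by field_simp; ring
  constructor
  · intro h
    have left_le : 1 - ω * a ≤ (b - a) / (a + b) :=
      h ▸ (le_abs_self _).trans (le_max_left _ _)
    have right_le : -(1 - ω * b) ≤ (b - a) / (a + b) :=
      h ▸ (neg_le_abs _).trans (le_max_right _ _)
    apply le_antisymm
    · exact le_of_mul_le_mul_right (by linarith) hb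
    · exact le_of_mul_le_mul_right (by linarith) ha
  · rintro rfl
    rw [one_sub_left, one_sub_right, abs_neg, max_self,
      abs_of_nonneg (div_nonneg (sub_nonneg.2 hab) hs.le)]

end Damping

section Symbols

theorem cos_nonpos_or_cos_nonpos_of_mem_TH {θ : ℝ × ℝ} (hθ : θ ∈ TH) :
    cos θ.1 ≤ 0 ∨ cos θ.2 ≤ 0 := by
  obtain ⟨⟨⟨lower₁, upper₁⟩, ⟨lower₂, upper₂⟩⟩, not_low⟩ := hθ
  have high : π / 2 < θ.1 ∨ π / 2 < θ.2 := by
    by_contra! h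
    exact not_low ⟨⟨lower₁, h.1⟩, ⟨lower₂, h.2⟩⟩
  exact high.imp (fun h => cos_nonpos_of_pi_div_two_le_of_le h.le (by linarith))
    (fun h => cos_nonpos_of_pi_div_two_le_of_le h.le (by linarith))

theorem isLeast_chi_image_TH : IsLeast (chi '' TH) 2 := by
  constructor
  · refine ⟨(3 * π / 2, 0), ?_, ?_⟩
    · simp only [TH, mem_sdiff, mem_prod, mem_Ioc]
      grind [pi_pos]
    · have cos_eq : cos (3 * π / 2) = 0 := by
        rw [show 3 * π / 2 = π / 2 + π by ring, cos_add_pi, cos_pi_div_two, neg_zero]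
      norm_num [chi, cos_eq]
  · rintro _ ⟨θ, hθ, rfl⟩
    unfold chi
    rcases cos_nonpos_or_cos_nonpos_of_mem_TH hθ with h | h <;>
      linarith [cos_le_one θ.1, cos_le_one θ.2]

theorem isGreatest_chi_image_TH : IsGreatest (chi '' TH) 8 := by
  constructor
  · refine ⟨(π, π), ?_, ?_⟩
    · simp only [TH, mem_sdiff, mem_prod, mem_Ioc]
      grind [pi_pos]
    · norm_num [chi]
  · rintro _ ⟨θ, -, rfl⟩
    unfold chi
    linarith [neg_one_le_cos θ.1, neg_one_le_cos θ.2]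

theorem chi_mem_Icc {θ : ℝ × ℝ} (hθ : θ ∈ TH) : chi θ ∈ Icc 2 8 :=
  ⟨isLeast_chi_image_TH.2 (mem_image_of_mem chi hθ),
    isGreatest_chi_image_TH.2 (mem_image_of_mem chi hθ)⟩

-- The condition on `ρ` says precisely that the value at `t = 2` lies in the interval.
theorem sigmaStar_mem_Icc {t ρ : ℝ} (ht : t ∈ Icc (1 / 2) 2) (hρ : ρ ≤ -1 ∨ -1 / 4 ≤ ρ) :
    sigmaStar t ρ ∈ Icc (1 / 2) 2 := by
  obtain ⟨ht₁, ht₂⟩ := ht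
  unfold sigmaStar
  rcases hρ with hρ | hρ
  · have den_neg : 1 + (1 + t) * ρ < 0 := by nlinarith
    have lower : 1 + (3 - t) * ρ ≤ 0 := by nlinarith
    have upper : 1 + 2 * t * ρ ≤ 0 := by nlinarith
    rw [mem_Icc, le_div_iff_of_neg den_neg, div_le_iff_of_neg den_neg]
    constructor <;> linarith
  · have den_pos : 0 < 1 + (1 + t) * ρ := by nlinarith
    have lower : 0 ≤ 1 + (3 - t) * ρ := by nlinarith
    have upper : 0 ≤ 1 + 2 * t * ρ := by nlinarith
    rw [mem_Icc, le_div_iff₀ den_pos, div_le_iff₀ den_pos]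
    constructor <;> linarith

theorem sigmaStar_four_div_chi_mem_Icc {θ : ℝ × ℝ} (hθ : θ ∈ TH) {ρ : ℝ}
    (hρ : ρ ≤ -1 ∨ -1 / 4 ≤ ρ) : sigmaStar (4 / chi θ) ρ ∈ Icc (1 / 2) 2 := by
  obtain ⟨two_le, le_eight⟩ := chi_mem_Icc hθ
  have chi_pos : 0 < chi θ := by linarith
  refine sigmaStar_mem_Icc ⟨?_, ?_⟩ hρ
  · rw [le_div_iff₀ chi_pos]
    linarith
  · rw [div_le_iff₀ chi_pos]
    linarith

end Symbols

theorem isLUB_max_abs_one_sub_mul_image_TH {σ : ℝ × ℝ → ℝ} (hσ : ∀ θ ∈ TH, σ θ ∈ Icc (1 / 2) 2)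
    (ω : ℝ) :
    IsLUB ((fun θ => max |1 - ω| (max |1 - ω * (chi θ / 4)| |1 - ω * σ θ|)) '' TH)
      (max |1 - ω * (1 / 2)| |1 - ω * 2|) := by
  constructor
  · rintro _ ⟨θ, hθ, rfl⟩
    obtain ⟨two_le, le_eight⟩ := chi_mem_Icc hθ
    refine max_le ?_ (max_le ?_ (abs_one_sub_mul_le_max (hσ θ hθ) ω))
    · simpa only [mul_one] using
        abs_one_sub_mul_le_max (show (1 : ℝ) ∈ Icc (1 / 2) 2 by norm_num) ω
    · exact abs_one_sub_mul_le_max ⟨by linarith, by linarith⟩ ω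
  · intro M hM
    have chi_le : ∀ θ ∈ TH, |1 - ω * (chi θ / 4)| ≤ M := fun θ hθ =>
      ((le_max_left _ _).trans (le_max_right _ _)).trans (hM (mem_image_of_mem _ hθ))
    obtain ⟨θ₂, hθ₂, chi_eq_two⟩ := isLeast_chi_image_TH.1
    obtain ⟨θ₈, hθ₈, chi_eq_eight⟩ := isGreatest_chi_image_TH.1
    apply max_le
    · calc |1 - ω * (1 / 2)| = |1 - ω * (chi θ₂ / 4)| := by rw [chi_eq_two]; norm_num
        _ ≤ M := chi_le θ₂ hθ₂
    · calc |1 - ω * 2| = |1 - ω * (chi θ₈ / 4)| := by rw [chi_eq_eight]; norm_num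
        _ ≤ M := chi_le θ₈ hθ₈

theorem stmt_12_general (ρ : ℝ) (hρ : ρ ≤ -1 ∨ -1 / 4 ≤ ρ) (ω : ℝ) :
    3/5 ≤ sSup ((fun θ =>
        max |1 - ω| (max |1 - ω * (chi θ / 4)| |1 - ω * sigmaStar (4 / chi θ) ρ|)) '' TH) ∧
      (sSup ((fun θ =>
        max |1 - ω| (max |1 - ω * (chi θ / 4)| |1 - ω * sigmaStar (4 / chi θ) ρ|)) '' TH) = 3/5
        ↔ ω = 4/5) := by
  have nonempty_TH : TH.Nonempty := isLeast_chi_image_TH.nonempty.of_image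
  rw [(isLUB_max_abs_one_sub_mul_image_TH
    (fun _ hθ => sigmaStar_four_div_chi_mem_Icc hθ hρ) ω).csSup_eq (nonempty_TH.image _)]
  have factor_eq : (3 / 5 : ℝ) = (2 - 1 / 2) / (1 / 2 + 2) := by norm_num
  have damping_eq : (4 / 5 : ℝ) = 2 / (1 / 2 + 2) := by norm_num
  rw [factor_eq, damping_eq]
  exact ⟨sub_div_add_le_max_abs_one_sub_mul (by norm_num) (by norm_num) ω,
    max_abs_one_sub_mul_eq_sub_div_add_iff (by norm_num) (by norm_num)⟩

theorem stmt_12 (ρ : ℝ) (hρ : 0 < ρ) (ω : ℝ) :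
    3/5 ≤ sSup ((fun θ =>
        max |1 - ω| (max |1 - ω * (chi θ / 4)| |1 - ω * sigmaStar (4 / chi θ) ρ|)) '' TH) ∧
      (sSup ((fun θ =>
        max |1 - ω| (max |1 - ω * (chi θ / 4)| |1 - ω * sigmaStar (4 / chi θ) ρ|)) '' TH) = 3/5
        ↔ ω = 4/5) :=
  stmt_12_general ρ (Or.inr (by linarith)) ω
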